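/- If an admissible pair (φ,ψ) satisfies E1(φ,ψ) = 0, then φ(x) = 0 and ψ(x) = 0 for all x ∈ [-m,ℓ]. -/

import Mathlib

open Set MeasureTheory intervalIntegral Filter Topology

noncomputable section

namespace RT

/-- The piecewise integral `∫_{-m}^0 + ∫_0^ℓ`. -/
def pwInt (m l : ℝ) (f : ℝ → ℝ) : ℝ :=
  (∫ x in (-m)..(0:ℝ), f x) + ∫ x in (0:ℝ)..l, f x

/-- `f` restricted to `[-m,0)` extends continuously to `[-m,0]`, and `f` restricted to
`(0,ℓ]` extends continuously to `[0,ℓ]`. -/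
def PiecewiseCont (m l : ℝ) (f : ℝ → ℝ) : Prop :=
  (∃ F : ℝ → ℝ, ContinuousOn F (Icc (-m) 0) ∧ EqOn f F (Ico (-m) 0)) ∧
  (∃ F : ℝ → ℝ, ContinuousOn F (Icc 0 l) ∧ EqOn f F (Ioc 0 l))

/-- A profile function: the restriction to `[-m,0)` extends continuously to `[-m,0]`, and
the function is continuous on `[0,ℓ]` (hence right-continuous at `0`). -/
def Profile (m l : ℝ) (f : ℝ → ℝ) : Prop :=
  (∃ F : ℝ → ℝ, ContinuousOn F (Icc (-m) 0) ∧ EqOn f F (Ico (-m) 0)) ∧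
  ContinuousOn f (Icc 0 l)

/-- The four steady-state profiles `ρ0, p, ε0, δ0` with their positivity assumptions. -/
def ProfilesHyp (m l : ℝ) (ρ0 p ε0 δ0 : ℝ → ℝ) : Prop :=
  Profile m l ρ0 ∧ Profile m l p ∧ Profile m l ε0 ∧ Profile m l δ0 ∧
  (∀ x ∈ Icc (-m) l, 0 < ρ0 x) ∧ (∀ x ∈ Icc (-m) l, 0 < p x) ∧
  (∀ x ∈ Icc (-m) l, 0 < ε0 x) ∧ (∀ x ∈ Icc (-m) l, 0 ≤ δ0 x)

/-- `f` is continuous on `[-m,ℓ]` and continuously differentiable on `[-m,0]` and on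
`[0,ℓ]`, with piecewise derivative `fd`. -/
def PiecewiseC1 (m l : ℝ) (f fd : ℝ → ℝ) : Prop :=
  ContinuousOn f (Icc (-m) l) ∧
  (∀ x ∈ Ico (-m) 0, HasDerivWithinAt f (fd x) (Icc (-m) 0) x) ∧
  (∀ x ∈ Ioc 0 l, HasDerivWithinAt f (fd x) (Icc 0 l) x) ∧
  PiecewiseCont m l fd

/-- An admissible pair `(φ,ψ)` with piecewise derivatives `(φd,ψd)`. -/
def Admissible (m l : ℝ) (φ ψ φd ψd : ℝ → ℝ) : Prop :=
  PiecewiseC1 m l φ φd ∧ PiecewiseC1 m l ψ ψd ∧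
  φ (-m) = 0 ∧ φ l = 0 ∧ ψ (-m) = 0 ∧ ψ l = 0

/-- The energy `E(φ,ψ;s)`. -/
def energyE (m l g σ k : ℝ) (ρ0 p ε0 δ0 : ℝ → ℝ) (φ ψ φd ψd : ℝ → ℝ) (s : ℝ) : ℝ :=
  σ * k ^ 2 / 2 * (ψ 0) ^ 2
  + (1 / 2) * pwInt m l (fun x =>
      (s * δ0 x + p x * ρ0 x) * (ψd x + k * φ x) ^ 2 - 2 * g * ρ0 x * k * φ x * ψ x)
  + (s / 2) * pwInt m l (fun x =>
      ε0 x * ((φd x - k * ψ x) ^ 2 + (ψd x - k * φ x) ^ 2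
        + (1 / 3) * (ψd x + k * φ x) ^ 2))

/-- The normalization functional `J(φ,ψ)`. -/
def energyJ (m l : ℝ) (ρ0 : ℝ → ℝ) (φ ψ : ℝ → ℝ) : ℝ :=
  (1 / 2) * pwInt m l (fun x => ρ0 x * ((φ x) ^ 2 + (ψ x) ^ 2))

/-- The viscous part `E1(φ,ψ)` of the energy. -/
def energyE1 (m l k : ℝ) (ε0 δ0 : ℝ → ℝ) (φ ψ φd ψd : ℝ → ℝ) : ℝ :=
  (1 / 2) * pwInt m l (fun x => (δ0 x + ε0 x / 3) * (ψd x + k * φ x) ^ 2)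
  + (1 / 2) * pwInt m l (fun x =>
      ε0 x * ((φd x - k * ψ x) ^ 2 + (ψd x - k * φ x) ^ 2))

/-- `μ(s)`: the infimum of `E(·,·;s)` over admissible pairs with `J = 1`. -/
def muInf (m l g σ k : ℝ) (ρ0 p ε0 δ0 : ℝ → ℝ) (s : ℝ) : ℝ :=
  sInf { e : ℝ | ∃ φ ψ φd ψd : ℝ → ℝ, Admissible m l φ ψ φd ψd ∧
    energyJ m l ρ0 φ ψ = 1 ∧ e = energyE m l g σ k ρ0 p ε0 δ0 φ ψ φd ψd s }

/-- The hydrostatic steady-state relation `ρ0' = -g ρ0 / p` on each piece. -/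
def Hydrostatic (m l g : ℝ) (ρ0 p : ℝ → ℝ) : Prop :=
  (∀ x ∈ Ico (-m) 0, HasDerivWithinAt ρ0 (-g * ρ0 x / p x) (Ico (-m) 0) x) ∧
  (∀ x ∈ Ioc 0 l, HasDerivWithinAt ρ0 (-g * ρ0 x / p x) (Ioc 0 l) x)

end RT

namespace RT

/-- `f` agrees on `(a,b)` with a function continuous on `[a,b]`. -/
def Ext (a b : ℝ) (f : ℝ → ℝ) : Prop :=
  ∃ F : ℝ → ℝ, ContinuousOn F (Icc a b) ∧ EqOn f F (Ioo a b)

lemma Ext.add {a b : ℝ} {f h : ℝ → ℝ} (hf : Ext a b f) (hh : Ext a b h) :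
    Ext a b (fun x => f x + h x) := by
  obtain ⟨F, hF, eF⟩ := hf
  obtain ⟨H, hH, eH⟩ := hh
  exact ⟨fun x => F x + H x, hF.add hH, fun x hx => by simp [eF hx, eH hx]⟩

lemma Ext.sub {a b : ℝ} {f h : ℝ → ℝ} (hf : Ext a b f) (hh : Ext a b h) :
    Ext a b (fun x => f x - h x) := by
  obtain ⟨F, hF, eF⟩ := hf
  obtain ⟨H, hH, eH⟩ := hh
  exact ⟨fun x => F x - H x, hF.sub hH, fun x hx => by simp [eF hx, eH hx]⟩

lemma Ext.mul {a b : ℝ} {f h : ℝ → ℝ} (hf : Ext a b f) (hh : Ext a b h) :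
    Ext a b (fun x => f x * h x) := by
  obtain ⟨F, hF, eF⟩ := hf
  obtain ⟨H, hH, eH⟩ := hh
  exact ⟨fun x => F x * H x, hF.mul hH, fun x hx => by simp [eF hx, eH hx]⟩

lemma Ext.sq {a b : ℝ} {f : ℝ → ℝ} (hf : Ext a b f) : Ext a b (fun x => f x ^ 2) := by
  obtain ⟨F, hF, eF⟩ := hf
  exact ⟨fun x => F x ^ 2, hF.pow 2, fun x hx => by simp [eF hx]⟩

lemma Ext.cmul {a b : ℝ} {f : ℝ → ℝ} (c : ℝ) (hf : Ext a b f) :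
    Ext a b (fun x => c * f x) := by
  obtain ⟨F, hF, eF⟩ := hf
  exact ⟨fun x => c * F x, continuousOn_const.mul hF, fun x hx => by simp [eF hx]⟩

lemma Ext.div {a b : ℝ} {f : ℝ → ℝ} (c : ℝ) (hf : Ext a b f) :
    Ext a b (fun x => f x / c) := by
  obtain ⟨F, hF, eF⟩ := hf
  exact ⟨fun x => F x / c, hF.div_const c, fun x hx => by simp [eF hx]⟩

lemma int_eq {a b : ℝ} (hab : a < b) (f : ℝ → ℝ) :
    ∫ x in a..b, f x = ∫ x in Ioo a b, f x := by
  rw [intervalIntegral.integral_of_le hab.le, integral_Ioc_eq_integral_Ioo]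

lemma int_nonneg {a b : ℝ} (hab : a < b) {f : ℝ → ℝ} (h0 : ∀ x ∈ Ioo a b, 0 ≤ f x) :
    0 ≤ ∫ x in a..b, f x := by
  rw [int_eq hab]
  exact setIntegral_nonneg measurableSet_Ioo h0

lemma eq_zero_of_int {a b : ℝ} (hab : a < b) {f : ℝ → ℝ} (hf : Ext a b f)
    (h0 : ∀ x ∈ Ioo a b, 0 ≤ f x) (hI : ∫ x in a..b, f x = 0) :
    ∀ x ∈ Ioo a b, f x = 0 := by
  obtain ⟨F, hF, eF⟩ := hf
  rw [int_eq hab] at hI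
  have hint : IntegrableOn f (Ioo a b) :=
    ((hF.integrableOn_Icc).mono_set Ioo_subset_Icc_self).congr_fun eF.symm measurableSet_Ioo
  have hc : ContinuousOn f (Ioo a b) := (hF.mono Ioo_subset_Icc_self).congr eF
  have hae := (setIntegral_eq_zero_iff_of_nonneg_ae
    ((ae_restrict_iff' measurableSet_Ioo).2 (Eventually.of_forall h0)) hint).1 hI
  exact Measure.eqOn_open_of_ae_eq hae isOpen_Ioo hc continuousOn_const

lemma piece {a b k : ℝ} (hab : a < b) (hk : 0 < k) {ε δ φ ψ φd ψd : ℝ → ℝ}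
    (hε : Ext a b ε) (hδ : Ext a b δ) (hφ : Ext a b φ) (hψ : Ext a b ψ)
    (hφd : Ext a b φd) (hψd : Ext a b ψd)
    (ε0 : ∀ x ∈ Ioo a b, 0 < ε x) (δ0 : ∀ x ∈ Ioo a b, 0 ≤ δ x)
    (hd : ∀ x ∈ Ioo a b, HasDerivWithinAt φ (φd x) (Icc a b) x) :
    0 ≤ (∫ x in a..b, (δ x + ε x / 3) * (ψd x + k * φ x) ^ 2) ∧
    0 ≤ (∫ x in a..b, ε x * ((φd x - k * ψ x) ^ 2 + (ψd x - k * φ x) ^ 2)) ∧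
    ((∫ x in a..b, (δ x + ε x / 3) * (ψd x + k * φ x) ^ 2) = 0 →
     (∫ x in a..b, ε x * ((φd x - k * ψ x) ^ 2 + (ψd x - k * φ x) ^ 2)) = 0 →
     ∀ x ∈ Ioo a b, φ x = 0 ∧ ψ x = 0) := by
  have p1 : ∀ x ∈ Ioo a b, 0 ≤ (δ x + ε x / 3) * (ψd x + k * φ x) ^ 2 := fun x hx => by
    have := ε0 x hx
    have := δ0 x hx
    positivity
  have p2 : ∀ x ∈ Ioo a b,
      0 ≤ ε x * ((φd x - k * ψ x) ^ 2 + (ψd x - k * φ x) ^ 2) := fun x hx => by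
    have := ε0 x hx
    positivity
  refine ⟨int_nonneg hab p1, int_nonneg hab p2, fun i1 i2 => ?_⟩
  have z1 := eq_zero_of_int hab ((hδ.add (hε.div 3)).mul (hψd.add (hφ.cmul k)).sq) p1 i1
  have z2 := eq_zero_of_int hab
    (hε.mul ((hφd.sub (hψ.cmul k)).sq.add (hψd.sub (hφ.cmul k)).sq)) p2 i2
  have q : ∀ x ∈ Ioo a b, φ x = 0 ∧ φd x - k * ψ x = 0 := fun x hx => by
    have e := ε0 x hx
    have d := δ0 x hx
    have w1 : ψd x + k * φ x = 0 := by
      rcases mul_eq_zero.1 (z1 x hx) with h | h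
      · linarith
      · exact pow_eq_zero_iff two_ne_zero |>.1 h
    have w2 : (φd x - k * ψ x) ^ 2 + (ψd x - k * φ x) ^ 2 = 0 :=
      (mul_eq_zero.1 (z2 x hx)).resolve_left e.ne'
    have w3 : φd x - k * ψ x = 0 := by
      apply pow_eq_zero_iff two_ne_zero |>.1
      nlinarith [sq_nonneg (φd x - k * ψ x), sq_nonneg (ψd x - k * φ x)]
    have w4 : ψd x - k * φ x = 0 := by
      apply pow_eq_zero_iff two_ne_zero |>.1
      nlinarith [sq_nonneg (φd x - k * ψ x), sq_nonneg (ψd x - k * φ x)]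
    have w5 : k * φ x = 0 := by linarith
    exact ⟨(mul_eq_zero.1 w5).resolve_left hk.ne', w3⟩
  intro x hx
  refine ⟨(q x hx).1, ?_⟩
  have h1 : HasDerivAt φ (φd x) x := (hd x hx).hasDerivAt (Icc_mem_nhds hx.1 hx.2)
  have h2 : HasDerivAt φ 0 x := (hasDerivAt_const x (0:ℝ)).congr_of_eventuallyEq (by
    filter_upwards [Ioo_mem_nhds hx.1 hx.2] with y hy using (q y hy).1)
  have h3 := h1.unique h2
  have h4 : k * ψ x = 0 := by linarith [(q x hx).2]
  exact (mul_eq_zero.1 h4).resolve_left hk.ne'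

lemma zero_at {m l : ℝ} (hm : 0 < m) (hl : 0 < l) {f : ℝ → ℝ}
    (hf : ContinuousOn f (Icc (-m) l)) (h : ∀ x ∈ Ioo (-m) 0, f x = 0) : f 0 = 0 := by
  have hc : ContinuousAt f 0 := hf.continuousAt (Icc_mem_nhds (by linarith) hl)
  have t1 : Tendsto f (𝓝[<] 0) (𝓝 (f 0)) := hc.tendsto.mono_left nhdsWithin_le_nhds
  have t2 : Tendsto f (𝓝[<] 0) (𝓝 0) := by
    refine tendsto_const_nhds.congr' ?_
    filter_upwards [Ioo_mem_nhdsLT (show -m < 0 by linarith)] with y hy using (h y hy).symm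
  exact tendsto_nhds_unique t1 t2

/-- If the viscous energy `E1(φ,ψ)` of an admissible pair vanishes, then `φ` and `ψ`
vanish identically on `[-m,ℓ]`. -/
theorem E1_eq_zero_implies_zero (m l g σ k : ℝ) (ρ0 p ε0 δ0 φ ψ φd ψd : ℝ → ℝ)
    (hm : 0 < m) (hl : 0 < l) (hg : 0 < g) (hσ : 0 ≤ σ) (hk : 0 < k)
    (hprof : ProfilesHyp m l ρ0 p ε0 δ0)
    (hadm : Admissible m l φ ψ φd ψd)
    (hE1 : energyE1 m l k ε0 δ0 φ ψ φd ψd = 0) :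
    ∀ x ∈ Icc (-m) l, φ x = 0 ∧ ψ x = 0 := by
  obtain ⟨-, -, ⟨⟨Eε, hEε, eEε⟩, hε⟩, ⟨⟨Eδ, hEδ, eEδ⟩, hδ⟩, -, -, ε0p, δ0p⟩ := hprof
  obtain ⟨⟨hφ, dφ1, dφ2, ⟨A, hA, eA⟩, ⟨B, hB, eB⟩⟩, ⟨hψ, -, -, ⟨C, hC, eC⟩, ⟨D, hD, eD⟩⟩,
    b1, b2, b3, b4⟩ := hadm
  have s1 : Icc (-m) 0 ⊆ Icc (-m) l := Icc_subset_Icc_right hl.le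
  have s2 : Icc 0 l ⊆ Icc (-m) l := Icc_subset_Icc_left (by linarith)
  obtain ⟨n1, n2, h1⟩ := piece (a := -m) (b := 0) (by linarith) hk
    (ε := ε0) (δ := δ0) (φ := φ) (ψ := ψ) (φd := φd) (ψd := ψd)
    ⟨Eε, hEε, eEε.mono Ioo_subset_Ico_self⟩ ⟨Eδ, hEδ, eEδ.mono Ioo_subset_Ico_self⟩
    ⟨φ, hφ.mono s1, fun _ _ => rfl⟩ ⟨ψ, hψ.mono s1, fun _ _ => rfl⟩
    ⟨A, hA, eA.mono Ioo_subset_Ico_self⟩ ⟨C, hC, eC.mono Ioo_subset_Ico_self⟩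
    (fun x hx => ε0p x (s1 (Ioo_subset_Icc_self hx)))
    (fun x hx => δ0p x (s1 (Ioo_subset_Icc_self hx)))
    (fun x hx => dφ1 x (Ioo_subset_Ico_self hx))
  obtain ⟨n3, n4, h2⟩ := piece (a := 0) (b := l) hl hk
    (ε := ε0) (δ := δ0) (φ := φ) (ψ := ψ) (φd := φd) (ψd := ψd)
    ⟨ε0, hε, fun _ _ => rfl⟩ ⟨δ0, hδ, fun _ _ => rfl⟩
    ⟨φ, hφ.mono s2, fun _ _ => rfl⟩ ⟨ψ, hψ.mono s2, fun _ _ => rfl⟩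
    ⟨B, hB, eB.mono Ioo_subset_Ioc_self⟩ ⟨D, hD, eD.mono Ioo_subset_Ioc_self⟩
    (fun x hx => ε0p x (s2 (Ioo_subset_Icc_self hx)))
    (fun x hx => δ0p x (s2 (Ioo_subset_Icc_self hx)))
    (fun x hx => dφ2 x (Ioo_subset_Ioc_self hx))
  unfold energyE1 pwInt at hE1
  have z1 := h1 (by linarith) (by linarith)
  have z2 := h2 (by linarith) (by linarith)
  intro x hx
  rcases eq_or_lt_of_le hx.1 with h | h
  · rw [← h]
    exact ⟨b1, b3⟩
  rcases eq_or_lt_of_le hx.2 with h' | h'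
  · rw [h']
    exact ⟨b2, b4⟩
  rcases lt_trichotomy x 0 with hx0 | hx0 | hx0
  · exact z1 x ⟨h, hx0⟩
  · rw [hx0]
    exact ⟨zero_at hm hl hφ fun y hy => (z1 y hy).1, zero_at hm hl hψ fun y hy => (z1 y hy).2⟩
  · exact z2 x ⟨hx0, h'⟩

end RT
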